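/- Assume θ ≥ 0, b ≥ 0 and c ≤ 0 on Ω. Let g be a fixed boundary datum and n ≥ 1 an integer. Let Ψ_n ∈ C²(Ω) ∩ C¹(cl(Ω)) with Ψ_n > 0 satisfy -∇·(a∇Ψ_n) + bΨ_n = -c(Ψ_n + 1/n)^{-θ} in Ω with Ψ_n = g on ∂Ω; let φ ∈ C²(Ω) ∩ C¹(cl(Ω)) satisfy -∇·(a∇φ) + bφ = 0 in Ω with φ = g on ∂Ω; and let v_n ∈ C²(Ω) ∩ C¹(cl(Ω)) satisfy -∇·(a∇v_n) + b v_n = -c·(1/n)^{-θ} in Ω with v_n = g on ∂Ω. Then v_n ≥ Ψ_n ≥ φ everywhere in Ω. -/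

import Mathlib

/-!
Put `L u = -∇·(a∇u) + b u` and `δ = 1 / n`. Since `t ↦ t ^ (-θ)` is decreasing and `c ≤ 0`, the
right-hand sides satisfy `0 ≤ -c (Ψ + δ) ^ (-θ) ≤ -c δ ^ (-θ)`, so both bounds follow from the
comparison principle for `L`, that is, from the weak maximum principle applied to a difference of
two solutions.

For the maximum principle, let `w ≤ 0` on `∂Ω` and `∇·(a∇w) ≥ 0` on `{w > 0}`, and suppose
`m = w x > 0` for some `x`. Then `K = {w ≥ m / 2}` is a compact subset of `Ω`, so for large `l` the
function `h y = exp (l yⱼ)` satisfies `∇·(a∇h) > 0` on `K`. For small `ε > 0` the maximum of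
`w + ε h` over `cl(Ω)` is attained in `K`, where `∇·(a∇(w + ε h)) > 0`; but `∇·(a∇·) ≤ 0` at an
interior maximum.
-/

open Real Set MeasureTheory Filter Topology

/-- Divergence-form operator `∇·(a∇u)(x) = ∑ i ∂_i (a ∂_i u)(x)`. -/
noncomputable def divA {d : ℕ} (a u : EuclideanSpace ℝ (Fin d) → ℝ)
    (x : EuclideanSpace ℝ (Fin d)) : ℝ :=
  ∑ i : Fin d,
    fderiv ℝ (fun y => a y * fderiv ℝ u y (EuclideanSpace.single i (1 : ℝ))) x
      (EuclideanSpace.single i (1 : ℝ))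

/-- Squared Euclidean norm of the gradient `|∇u|²(x)`. -/
noncomputable def gradSq {d : ℕ} (u : EuclideanSpace ℝ (Fin d) → ℝ)
    (x : EuclideanSpace ℝ (Fin d)) : ℝ :=
  ∑ i : Fin d, (fderiv ℝ u x (EuclideanSpace.single i (1 : ℝ))) ^ 2

/-- If the derivative of `p f'` at the maximum were positive, then `f` would also have a local
minimum there, hence be locally constant, and the derivative of `p f'` would vanish. -/
lemma deriv_mul_deriv_nonpos_of_isLocalMax {p f : ℝ → ℝ} {t₀ : ℝ} (hp : ∀ᶠ t in 𝓝 t₀, 0 < p t)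
    (hf : ContinuousAt f t₀) (hmax : IsLocalMax f t₀) :
    deriv (fun t => p t * deriv f t) t₀ ≤ 0 := by
  by_contra! hpos
  have hsign : ∀ᶠ t in 𝓝 t₀, SignType.sign (deriv f t) = SignType.sign (t - t₀) := by
    filter_upwards [hp, eventually_nhdsWithin_sign_eq_of_deriv_pos hpos
      (by rw [hmax.deriv_eq_zero, mul_zero])] with t hpt ht
    rwa [sign_mul, sign_pos hpt, one_mul] at ht
  have hmin : IsLocalMin f t₀ := isLocalMin_of_sign_deriv hf (hsign.filter_mono nhdsWithin_le_nhds)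
  have hconst : f =ᶠ[𝓝 t₀] fun _ => f t₀ := by
    filter_upwards [hmax, hmin] with t h₁ h₂ using le_antisymm h₁ h₂
  have hzero : (fun t => p t * deriv f t) =ᶠ[𝓝 t₀] fun _ => 0 := by
    filter_upwards [hconst.deriv] with t ht
    rw [ht, deriv_const, mul_zero]
  rw [hzero.deriv_eq, deriv_const] at hpos
  exact hpos.false

section NormedSpace

variable {E : Type*} [NormedAddCommGroup E] [NormedSpace ℝ E] {a u : E → ℝ} {x : E}

lemma fderiv_mul_fderiv_nonpos_of_isLocalMax (ha : ∀ᶠ y in 𝓝 x, 0 < a y)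
    (hu : ∀ᶠ y in 𝓝 x, DifferentiableAt ℝ u y) (hmax : IsLocalMax u x) (e : E) :
    fderiv ℝ (fun y => a y * fderiv ℝ u y e) x e ≤ 0 := by
  by_cases hflux : DifferentiableAt ℝ (fun y => a y * fderiv ℝ u y e) x
  swap
  · simp [fderiv_zero_of_not_differentiableAt hflux]
  have hline (t : ℝ) : HasDerivAt (fun t : ℝ => x + t • e) e t := by
    simpa using ((hasDerivAt_id t).smul_const e).const_add x
  have htend : Tendsto (fun t : ℝ => x + t • e) (𝓝 0) (𝓝 x) := by
    simpa using (hline 0).continuousAt.tendsto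
  have hderiv : (fun t : ℝ => a (x + t • e) * fderiv ℝ u (x + t • e) e) =ᶠ[𝓝 0]
      fun t => a (x + t • e) * deriv (fun s : ℝ => u (x + s • e)) t := by
    filter_upwards [htend.eventually hu] with t ht
    exact congrArg _ (ht.hasFDerivAt.comp_hasDerivAt t (hline t)).deriv.symm
  have hcont : ContinuousAt (fun t : ℝ => u (x + t • e)) 0 :=
    ContinuousAt.comp_of_eq hu.self_of_nhds.continuousAt (hline 0).continuousAt (by simp)
  have hmax' : IsLocalMax (fun t : ℝ => u (x + t • e)) 0 := by
    simpa [IsLocalMax, IsMaxFilter] using htend.eventually hmax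
  calc fderiv ℝ (fun y => a y * fderiv ℝ u y e) x e
      = deriv (fun t : ℝ => a (x + t • e) * fderiv ℝ u (x + t • e) e) 0 :=
        hflux.lineDeriv_eq_fderiv.symm
    _ = deriv (fun t : ℝ => a (x + t • e) * deriv (fun s : ℝ => u (x + s • e)) t) 0 :=
        hderiv.deriv_eq
    _ ≤ 0 := deriv_mul_deriv_nonpos_of_isLocalMax (htend.eventually ha) hcont hmax'

lemma eventually_differentiableAt_of_contDiffAt {n : WithTop ℕ∞} (hu : ContDiffAt ℝ n u x)
    (hn : 1 ≤ n) : ∀ᶠ y in 𝓝 x, DifferentiableAt ℝ u y :=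
  ((hu.of_le hn).eventually (by simp)).mono fun _ hy => hy.differentiableAt one_ne_zero

lemma differentiableAt_mul_fderiv_apply (ha : DifferentiableAt ℝ a x) (hu : ContDiffAt ℝ 2 u x)
    (e : E) : DifferentiableAt ℝ (fun y => a y * fderiv ℝ u y e) x :=
  ha.mul (((hu.fderiv_right (m := 1) (by norm_num)).differentiableAt one_ne_zero).clm_apply
    (differentiableAt_const e))

end NormedSpace

section DivA

variable {d : ℕ} {a u v : EuclideanSpace ℝ (Fin d) → ℝ} {x : EuclideanSpace ℝ (Fin d)}

lemma divA_nonpos_of_isLocalMax (ha : ∀ᶠ y in 𝓝 x, 0 < a y)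
    (hu : ∀ᶠ y in 𝓝 x, DifferentiableAt ℝ u y) (hmax : IsLocalMax u x) : divA a u x ≤ 0 :=
  Finset.sum_nonpos fun _ _ => fderiv_mul_fderiv_nonpos_of_isLocalMax ha hu hmax _

lemma divA_add (ha : DifferentiableAt ℝ a x) (hu : ContDiffAt ℝ 2 u x) (hv : ContDiffAt ℝ 2 v x) :
    divA a (u + v) x = divA a u x + divA a v x := by
  simp only [divA, ← Finset.sum_add_distrib]
  refine Finset.sum_congr rfl fun i _ => ?_
  set e := EuclideanSpace.single i (1 : ℝ)
  have hflux : (fun y => a y * fderiv ℝ (u + v) y e) =ᶠ[𝓝 x]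
      fun y => a y * fderiv ℝ u y e + a y * fderiv ℝ v y e := by
    filter_upwards [eventually_differentiableAt_of_contDiffAt hu one_le_two,
      eventually_differentiableAt_of_contDiffAt hv one_le_two] with y huy hvy
    rw [fderiv_add huy hvy, add_apply, mul_add]
  rw [hflux.fderiv_eq, fderiv_fun_add (differentiableAt_mul_fderiv_apply ha hu e)
    (differentiableAt_mul_fderiv_apply ha hv e), add_apply]

lemma divA_const_smul (r : ℝ) : divA a (r • u) x = r * divA a u x := by
  simp only [divA, Finset.mul_sum]
  refine Finset.sum_congr rfl fun i _ => ?_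
  set e := EuclideanSpace.single i (1 : ℝ)
  have hflux : (fun y => a y * fderiv ℝ (r • u) y e) = r • fun y => a y * fderiv ℝ u y e := by
    funext y
    simp only [fderiv_const_smul_field, Pi.smul_apply, smul_apply, smul_eq_mul]
    ring
  rw [hflux, fderiv_const_smul_field, Pi.smul_apply, smul_apply, smul_eq_mul]

lemma divA_sub (ha : DifferentiableAt ℝ a x) (hu : ContDiffAt ℝ 2 u x) (hv : ContDiffAt ℝ 2 v x) :
    divA a (u - v) x = divA a u x - divA a v x := by
  have hneg : ContDiffAt ℝ 2 ((-1 : ℝ) • v) x := hv.const_smul (-1 : ℝ)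
  rw [show u - v = u + (-1 : ℝ) • v by rw [neg_one_smul, sub_eq_add_neg],
    divA_add ha hu hneg, divA_const_smul, neg_one_mul, sub_eq_add_neg]

lemma fderiv_exp_mul_coord_apply (l : ℝ) (j : Fin d) (y e : EuclideanSpace ℝ (Fin d)) :
    fderiv ℝ (fun z : EuclideanSpace ℝ (Fin d) => exp (l * z j)) y e =
      exp (l * y j) * (l * e j) := by
  have h := (((EuclideanSpace.proj j :
    EuclideanSpace ℝ (Fin d) →L[ℝ] ℝ).hasFDerivAt (x := y)).const_mul l).exp
  simpa using congrArg (· e) h.fderiv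

lemma divA_exp_mul_coord (ha : DifferentiableAt ℝ a x) (l : ℝ) (j : Fin d) :
    divA a (fun y => exp (l * y j)) x =
      l * exp (l * x j) * (l * a x + fderiv ℝ a x (EuclideanSpace.single j 1)) := by
  have hexp : DifferentiableAt ℝ (fun y : EuclideanSpace ℝ (Fin d) => exp (l * y j)) x := by
    fun_prop
  simp only [divA, fderiv_exp_mul_coord_apply]
  rw [Finset.sum_eq_single j (fun i _ hij => by simp [hij.symm]) (by simp),
    fderiv_fun_mul ha (hexp.mul_const _)]
  simp only [PiLp.single_eq_same, mul_one, fderiv_mul_const hexp, add_apply, smul_apply,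
    fderiv_exp_mul_coord_apply, smul_eq_mul]
  ring

lemma exists_contDiff_forall_divA_pos (hd : 0 < d) {Ω K : Set (EuclideanSpace ℝ (Fin d))}
    (hΩ : IsOpen Ω) (hK : IsCompact K) (hKΩ : K ⊆ Ω) (ha : ContDiffOn ℝ 1 a Ω)
    (hapos : ∀ y ∈ K, 0 < a y) :
    ∃ h : EuclideanSpace ℝ (Fin d) → ℝ, ContDiff ℝ 2 h ∧ ∀ y ∈ K, 0 < divA a h y := by
  let j : Fin d := ⟨0, hd⟩
  have hderiv : ContinuousOn (fun y => fderiv ℝ a y (EuclideanSpace.single j 1)) K :=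
    ((ha.continuousOn_fderiv_of_isOpen hΩ le_rfl).mono hKΩ).clm_apply continuousOn_const
  obtain ⟨M, hM⟩ := hK.bddAbove_image
    (hderiv.neg.div (ha.continuousOn.mono hKΩ) fun y hy => (hapos y hy).ne')
  set l : ℝ := max M 0 + 1
  have hl : 0 < l := by positivity
  refine ⟨fun y => exp (l * y j), by fun_prop, fun y hy => ?_⟩
  have hlt : -fderiv ℝ a y (EuclideanSpace.single j 1) < l * a y := by
    rw [← div_lt_iff₀ (hapos y hy)]
    exact ((hM (mem_image_of_mem _ hy)).trans (le_max_left M 0)).trans_lt (lt_add_one _)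
  rw [divA_exp_mul_coord ((ha.contDiffAt (hΩ.mem_nhds (hKΩ hy))).differentiableAt one_ne_zero)]
  have hsum : 0 < l * a y + fderiv ℝ a y (EuclideanSpace.single j 1) := by linarith
  exact mul_pos (mul_pos hl (exp_pos _)) hsum

end DivA

lemma exists_isMaxOn_add_smul_of_pos {X : Type*} [TopologicalSpace X] {s : Set X}
    (hs : IsCompact s) {w h : X → ℝ} (hw : ContinuousOn w s) (hh : ContinuousOn h s) {x : X}
    (hx : x ∈ s) (hwx : 0 < w x) :
    ∃ ε : ℝ, 0 < ε ∧ ∃ z ∈ s, w x / 2 ≤ w z ∧ IsMaxOn (w + ε • h) s z := by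
  obtain ⟨B, hB⟩ := hs.exists_bound_of_continuousOn hh
  obtain ⟨ε, hε, hεB⟩ := exists_pos_mul_lt (half_pos hwx) (2 * B)
  obtain ⟨z, hz, hmax⟩ := hs.exists_isMaxOn ⟨x, hx⟩ (hw.add (hh.const_smul ε))
  refine ⟨ε, hε, z, hz, ?_, hmax⟩
  have hxz : w x + ε * h x ≤ w z + ε * h z := hmax hx
  have hhx : ε * -B ≤ ε * h x := mul_le_mul_of_nonneg_left (abs_le.1 (hB x hx)).1 hε.le
  have hhz : ε * h z ≤ ε * B := mul_le_mul_of_nonneg_left (abs_le.1 (hB z hz)).2 hε.le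
  linarith

theorem nonpos_of_divA_nonneg_of_frontier_nonpos {d : ℕ} (hd : 0 < d)
    {Ω : Set (EuclideanSpace ℝ (Fin d))} (hΩ : IsOpen Ω) (hΩb : Bornology.IsBounded Ω)
    {a w : EuclideanSpace ℝ (Fin d) → ℝ} (ha : ContDiffOn ℝ 1 a Ω) (hapos : ∀ x ∈ Ω, 0 < a x)
    (hw2 : ContDiffOn ℝ 2 w Ω) (hwc : ContinuousOn w (closure Ω))
    (hwdiv : ∀ x ∈ Ω, 0 < w x → 0 ≤ divA a w x) (hwbd : ∀ x ∈ frontier Ω, w x ≤ 0) :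
    ∀ x ∈ closure Ω, w x ≤ 0 := by
  intro x hx
  by_contra! hwx
  have hcl : IsCompact (closure Ω) := hΩb.isCompact_closure
  have hK : IsCompact (closure Ω ∩ w ⁻¹' Ici (w x / 2)) :=
    hcl.of_isClosed_subset (hwc.preimage_isClosed_of_isClosed isClosed_closure isClosed_Ici)
      inter_subset_left
  have hKΩ : closure Ω ∩ w ⁻¹' Ici (w x / 2) ⊆ Ω := by
    rintro y ⟨hy, hwy⟩
    by_contra hyΩ
    have hy0 : w y ≤ 0 := hwbd y (hΩ.frontier_eq ▸ ⟨hy, hyΩ⟩)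
    exact absurd ((half_pos hwx).trans_le hwy) hy0.not_gt
  obtain ⟨h, hh, hhdiv⟩ := exists_contDiff_forall_divA_pos hd hΩ hK hKΩ ha
    fun y hy => hapos y (hKΩ hy)
  obtain ⟨ε, hε, z, hz, hwz, hmax⟩ :=
    exists_isMaxOn_add_smul_of_pos hcl hwc hh.continuous.continuousOn hx hwx
  have hzΩ : z ∈ Ω := hKΩ ⟨hz, hwz⟩
  have hnhds : Ω ∈ 𝓝 z := hΩ.mem_nhds hzΩ
  have hwz2 : ContDiffAt ℝ 2 w z := hw2.contDiffAt hnhds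
  have hhz2 : ContDiffAt ℝ 2 (ε • h) z := hh.contDiffAt.const_smul ε
  have hnonpos : divA a (w + ε • h) z ≤ 0 :=
    divA_nonpos_of_isLocalMax (eventually_of_mem hnhds hapos)
      (eventually_differentiableAt_of_contDiffAt (hwz2.add hhz2) one_le_two)
      (hmax.isLocalMax (mem_of_superset hnhds subset_closure))
  rw [divA_add ((ha.contDiffAt hnhds).differentiableAt one_ne_zero) hwz2 hhz2,
    divA_const_smul] at hnonpos
  have hpert : 0 < ε * divA a h z := mul_pos hε (hhdiv z ⟨hz, hwz⟩)
  linarith [hwdiv z hzΩ ((half_pos hwx).trans_le hwz)]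

theorem le_of_neg_divA_add_mul_le_of_frontier_le {d : ℕ} (hd : 0 < d)
    {Ω : Set (EuclideanSpace ℝ (Fin d))} (hΩ : IsOpen Ω) (hΩb : Bornology.IsBounded Ω)
    {a b u v : EuclideanSpace ℝ (Fin d) → ℝ} (ha : ContDiffOn ℝ 1 a Ω) (hapos : ∀ x ∈ Ω, 0 < a x)
    (hb : ∀ x ∈ Ω, 0 ≤ b x) (hu2 : ContDiffOn ℝ 2 u Ω) (huc : ContinuousOn u (closure Ω))
    (hv2 : ContDiffOn ℝ 2 v Ω) (hvc : ContinuousOn v (closure Ω))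
    (hle : ∀ x ∈ Ω, -divA a u x + b x * u x ≤ -divA a v x + b x * v x)
    (hbd : ∀ x ∈ frontier Ω, u x ≤ v x) :
    ∀ x ∈ closure Ω, u x ≤ v x := by
  intro x hx
  refine sub_nonpos.1 (nonpos_of_divA_nonneg_of_frontier_nonpos hd hΩ hΩb ha hapos (hu2.sub hv2)
    (huc.sub hvc) (fun y hy huv => ?_) (fun y hy => sub_nonpos.2 (hbd y hy)) x hx)
  have hnhds : Ω ∈ 𝓝 y := hΩ.mem_nhds hy
  have hsub : divA a (fun z => u z - v z) y = divA a u y - divA a v y :=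
    divA_sub ((ha.contDiffAt hnhds).differentiableAt one_ne_zero) (hu2.contDiffAt hnhds)
      (hv2.contDiffAt hnhds)
  linarith [hle y hy, mul_nonneg (hb y hy) huv.le]

theorem stmt9_general {d : ℕ} (hd : 0 < d) {Ω : Set (EuclideanSpace ℝ (Fin d))}
    (hΩ : IsOpen Ω) (hΩb : Bornology.IsBounded Ω) {a b c : EuclideanSpace ℝ (Fin d) → ℝ}
    (ha : ContDiffOn ℝ 1 a Ω) (hapos : ∀ x ∈ Ω, 0 < a x)
    (hb : ∀ x ∈ Ω, 0 ≤ b x) (hc : ∀ x ∈ Ω, c x ≤ 0) {θ δ : ℝ} (hθ : 0 ≤ θ) (hδ : 0 < δ)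
    {Ψ φ v : EuclideanSpace ℝ (Fin d) → ℝ}
    (hΨ2 : ContDiffOn ℝ 2 Ψ Ω) (hΨc : ContinuousOn Ψ (closure Ω)) (hΨnn : ∀ x ∈ Ω, 0 ≤ Ψ x)
    (hΨeq : ∀ x ∈ Ω, -divA a Ψ x + b x * Ψ x = -c x * (Ψ x + δ) ^ (-θ))
    (hφ2 : ContDiffOn ℝ 2 φ Ω) (hφc : ContinuousOn φ (closure Ω))
    (hφeq : ∀ x ∈ Ω, -divA a φ x + b x * φ x = 0)
    (hφbd : ∀ x ∈ frontier Ω, φ x ≤ Ψ x)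
    (hv2 : ContDiffOn ℝ 2 v Ω) (hvc : ContinuousOn v (closure Ω))
    (hveq : ∀ x ∈ Ω, -divA a v x + b x * v x = -c x * δ ^ (-θ))
    (hvbd : ∀ x ∈ frontier Ω, Ψ x ≤ v x) :
    ∀ x ∈ closure Ω, φ x ≤ Ψ x ∧ Ψ x ≤ v x := by
  have comparison {u₁ u₂ : EuclideanSpace ℝ (Fin d) → ℝ} :=
    le_of_neg_divA_add_mul_le_of_frontier_le hd hΩ hΩb ha hapos (u := u₁) (v := u₂) hb
  refine fun x hx => ⟨comparison hφ2 hφc hΨ2 hΨc (fun y hy => ?_) hφbd x hx,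
    comparison hΨ2 hΨc hv2 hvc (fun y hy => ?_) hvbd x hx⟩
  · rw [hφeq y hy, hΨeq y hy]
    exact mul_nonneg (neg_nonneg.2 (hc y hy)) (rpow_nonneg (add_nonneg (hΨnn y hy) hδ.le) _)
  · rw [hΨeq y hy, hveq y hy]
    exact mul_le_mul_of_nonneg_left
      (rpow_le_rpow_of_nonpos hδ (le_add_of_nonneg_left (hΨnn y hy)) (neg_nonpos.2 hθ))
      (neg_nonneg.2 (hc y hy))

theorem stmt9 {d : ℕ} (hd : 1 ≤ d) (Ω U : Set (EuclideanSpace ℝ (Fin d)))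
    (hΩo : IsOpen Ω) (hΩb : Bornology.IsBounded Ω)
    (hU : IsOpen U) (hUΩ : closure Ω ⊆ U)
    (a b c : EuclideanSpace ℝ (Fin d) → ℝ)
    (ha : ContDiffOn ℝ 1 a U) (a₀ : ℝ) (ha₀ : 0 < a₀) (halb : ∀ x ∈ Ω, a₀ ≤ a x)
    (hbcont : ContinuousOn b (closure Ω)) (hccont : ContinuousOn c (closure Ω))
    (θ : ℝ) (hθ : 0 ≤ θ)
    (hbnn : ∀ x ∈ Ω, 0 ≤ b x) (hcnp : ∀ x ∈ Ω, c x ≤ 0)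
    (g : EuclideanSpace ℝ (Fin d) → ℝ) (n : ℕ) (hn : 1 ≤ n)
    (Ψn φ vn : EuclideanSpace ℝ (Fin d) → ℝ)
    (hΨ2 : ContDiffOn ℝ 2 Ψn Ω) (hΨ1 : ContDiffOn ℝ 1 Ψn (closure Ω))
    (hΨpos : ∀ x ∈ closure Ω, 0 < Ψn x)
    (hΨeq : ∀ x ∈ Ω,
      -divA a Ψn x + b x * Ψn x = -c x * (Ψn x + 1 / (n : ℝ)) ^ (-θ))
    (hΨbd : ∀ x ∈ frontier Ω, Ψn x = g x)
    (hφ2 : ContDiffOn ℝ 2 φ Ω) (hφ1 : ContDiffOn ℝ 1 φ (closure Ω))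
    (hφeq : ∀ x ∈ Ω, -divA a φ x + b x * φ x = 0)
    (hφbd : ∀ x ∈ frontier Ω, φ x = g x)
    (hv2 : ContDiffOn ℝ 2 vn Ω) (hv1 : ContDiffOn ℝ 1 vn (closure Ω))
    (hveq : ∀ x ∈ Ω,
      -divA a vn x + b x * vn x = -c x * ((1 : ℝ) / (n : ℝ)) ^ (-θ))
    (hvbd : ∀ x ∈ frontier Ω, vn x = g x) :
    ∀ x ∈ Ω, φ x ≤ Ψn x ∧ Ψn x ≤ vn x :=
  fun x hx => stmt9_general hd hΩo hΩb (ha.mono (subset_closure.trans hUΩ))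
    (fun y hy => ha₀.trans_le (halb y hy)) hbnn hcnp hθ (one_div_pos.2 (Nat.cast_pos.2 hn))
    hΨ2 hΨ1.continuousOn (fun y hy => (hΨpos y (subset_closure hy)).le) hΨeq
    hφ2 hφ1.continuousOn hφeq (fun y hy => ((hφbd y hy).trans (hΨbd y hy).symm).le)
    hv2 hv1.continuousOn hveq (fun y hy => ((hΨbd y hy).trans (hvbd y hy).symm).le)
    x (subset_closure hx)
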